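/- Let T be a triangulated category admitting a filtered enhancement (F, F(≤0), F(≥0), s, α), and let S be a full triangulated subcategory of T. Then the full subcategory G of F with objects { X ∈ F : s^{−n} grⁿ(X) ∈ S for all n ∈ ℤ } is a full triangulated subcategory of F closed under s and s^{−1}, and, equipped with G(≤0) := G ∩ F(≤0), G(≥0) := G ∩ F(≥0) and the restrictions of s and α, it is a filtered triangulated category with G(≤0) ∩ G(≥0) = S; that is, G is a filtered enhancement of S. -/

import Mathlib

open CategoryTheory Category Limits Pretriangulated
namespace Paper
universe v u

variable {𝓕 : Type u} [Category.{v} 𝓕] [HasZeroObject 𝓕] [Preadditive 𝓕]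
  [HasShift 𝓕 ℤ] [∀ n : ℤ, (shiftFunctor 𝓕 n).Additive] [Pretriangulated 𝓕]

/-- A strictly full triangulated subcategory, encoded as a set of objects. -/
structure IsTriangulatedSub (S : Set 𝓕) : Prop where
  zero : ∀ X : 𝓕, IsZero X → X ∈ S
  isoClosed : ∀ {X Y : 𝓕}, (X ≅ Y) → X ∈ S → Y ∈ S
  shift : ∀ (n : ℤ), ∀ X ∈ S, X⟦n⟧ ∈ S
  ext₂ : ∀ T ∈ distTriang 𝓕, T.obj₁ ∈ S → T.obj₃ ∈ S → T.obj₂ ∈ S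

/-- `F` is a triangulated (exact) functor with respect to the commutation-with-shift
data `cs`. -/
def IsTriangulatedWith {D : Type*} [Category D] [HasZeroObject D] [Preadditive D]
    [HasShift D ℤ] [∀ n : ℤ, (shiftFunctor D n).Additive] [Pretriangulated D]
    (F : 𝓕 ⥤ D) (cs : F.CommShift ℤ) : Prop := by
  letI := cs; exact F.IsTriangulated

/-- A filtered triangulated category structure (Beilinson) on the triangulated
category `𝓕`: subcategories `𝓕(≤n)` and `𝓕(≥n)`, an exact equivalence `s` with
`𝓕(≤n) = s^n 𝓕(≤0)`, `𝓕(≥n) = s^n 𝓕(≥0)`, a natural transformation `α : id ⟶ s`,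
and the axioms fcat1–fcat6. -/
structure FilteredTriangulated (𝓕 : Type u) [Category.{v} 𝓕] [HasZeroObject 𝓕]
    [Preadditive 𝓕] [HasShift 𝓕 ℤ] [∀ n : ℤ, (shiftFunctor 𝓕 n).Additive]
    [Pretriangulated 𝓕] where
  le : ℤ → Set 𝓕
  ge : ℤ → Set 𝓕
  sub_le : ∀ n : ℤ, IsTriangulatedSub (le n)
  sub_ge : ∀ n : ℤ, IsTriangulatedSub (ge n)
  s : 𝓕 ⥤ 𝓕
  s_comm : s.CommShift ℤ
  s_triang : IsTriangulatedWith s s_comm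
  s_equiv : s.IsEquivalence
  α : 𝟭 𝓕 ⟶ s
  s_le : ∀ (n : ℤ) (X : 𝓕), X ∈ le n ↔ s.obj X ∈ le (n+1)
  s_ge : ∀ (n : ℤ) (X : 𝓕), X ∈ ge n ↔ s.obj X ∈ ge (n+1)
  fcat1_le : le 0 ⊆ le 1
  fcat1_ge : ge 1 ⊆ ge 0
  fcat2_le : ∀ X : 𝓕, ∃ n : ℤ, X ∈ le n
  fcat2_ge : ∀ X : 𝓕, ∃ n : ℤ, X ∈ ge n
  fcat3 : ∀ X ∈ ge 1, ∀ Y ∈ le 0, ∀ f : X ⟶ Y, f = 0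
  fcat4 : ∀ X : 𝓕, ∃ (A B : 𝓕) (_ : A ∈ ge 1) (_ : B ∈ le 0) (f : A ⟶ X) (g : X ⟶ B)
    (h : B ⟶ A⟦(1:ℤ)⟧), Triangle.mk f g h ∈ distTriang 𝓕
  fcat5 : ∀ X : 𝓕, α.app (s.obj X) = s.map (α.app X)
  fcat6a : ∀ X : 𝓕, s.obj X ∈ ge 1 → ∀ Y ∈ le 0,
    Function.Bijective (fun f : Y ⟶ X => f ≫ α.app X)
  fcat6b : ∀ X ∈ ge 1, ∀ Y ∈ le 0,
    Function.Bijective (fun f : s.obj Y ⟶ X => α.app Y ≫ f)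

/-- `SPowRel s n X Y` means `Y ≅ s^n X` (for `n : ℕ`). -/
def SPowRel (s : 𝓕 ⥤ 𝓕) : ℕ → 𝓕 → 𝓕 → Prop
  | 0, X, Y => Nonempty (X ≅ Y)
  | (n+1), X, Y => ∃ Z : 𝓕, SPowRel s n X Z ∧ Nonempty (s.obj Z ≅ Y)

/-- `SPowRelZ s n X Y` means `Y ≅ s^n X` (for `n : ℤ`). -/
def SPowRelZ (s : 𝓕 ⥤ 𝓕) (n : ℤ) (X Y : 𝓕) : Prop :=
  if 0 ≤ n then SPowRel s n.toNat X Y else SPowRel s (-n).toNat Y X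

/-- `GrCond Ft S n X` expresses that `s^{-n} grⁿ(X)` lies in `S`, where
`grⁿ = σ_{≤n} ∘ σ_{≥n}` is computed via the truncation triangles
`σ_{≥n} X → X → σ_{≤n-1} X` and `σ_{≥n+1}(σ_{≥n} X) → σ_{≥n} X → σ_{≤n}(σ_{≥n} X)`. -/
def GrCond (Ft : FilteredTriangulated 𝓕) (S : Set 𝓕) (n : ℤ) (X : 𝓕) : Prop :=
  ∃ (A B A' G' : 𝓕) (f : A ⟶ X) (g : X ⟶ B) (h : B ⟶ A⟦(1:ℤ)⟧)
    (f' : A' ⟶ A) (g' : A ⟶ G') (h' : G' ⟶ A'⟦(1:ℤ)⟧),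
    A ∈ Ft.ge n ∧ B ∈ Ft.le (n-1) ∧ A' ∈ Ft.ge (n+1) ∧ G' ∈ Ft.le n ∧
    (Triangle.mk f g h ∈ distTriang 𝓕) ∧ (Triangle.mk f' g' h' ∈ distTriang 𝓕) ∧
    ∃ W ∈ S, SPowRelZ Ft.s n W G'

/-!
Adjoints of exact functors are exact, so each `grⁿ = σ_{≤n} ∘ σ_{≥n}` is an exact endofunctor of
`𝓕`, and `X ∈ G` says that `grⁿ X` lies in the triangulated subcategory `sⁿ S` for every `n`. Hence
`G` is an intersection of preimages of triangulated subcategories under exact functors, and it is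
stable under `s^{±1}` because `grⁿ⁺¹ ∘ s ≅ s ∘ grⁿ`. The one condition not restricting formally
to `G` is fcat4: in the triangle `A ⟶ X ⟶ B` with `A ∈ 𝓕(≥1)` and `B ∈ 𝓕(≤0)`, the functor
`grⁿ` kills `A` for `n ≤ 0` and `B` for `n ≥ 1`, so `A` and `B` lie in `G` by two-out-of-three.
-/

lemma int_induction_of_iff_add_one {p : ℤ → Prop} (n : ℤ) (zero : p 0)
    (add_one : ∀ n, p n ↔ p (n + 1)) : p n := by
  induction n with
  | zero => exact zero
  | succ n ih => exact (add_one n).1 ih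
  | pred n ih => exact (add_one (-n - 1)).2 (by simpa using ih)

section TriangulatedSubcategories

lemma isTriangulatedSub_setOf_forall {ι : Sort*} (P : ι → ObjectProperty 𝓕)
    [∀ i, (P i).IsTriangulated] [∀ i, (P i).IsClosedUnderIsomorphisms] :
    IsTriangulatedSub {X | ∀ i, P i X} where
  zero _ hX i := (P i).prop_of_isZero hX
  isoClosed e hX i := (P i).prop_of_iso e (hX i)
  shift n _ hX i := (P i).le_shift n _ (hX i)
  ext₂ T hT h₁ h₃ i := (P i).ext_of_isTriangulatedClosed₂ T hT (h₁ i) (h₃ i)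

variable {S : Set 𝓕} (hS : IsTriangulatedSub S)

include hS

lemma IsTriangulatedSub.isClosedUnderIsomorphisms :
    ObjectProperty.IsClosedUnderIsomorphisms (· ∈ S) where
  of_iso := hS.isoClosed

lemma IsTriangulatedSub.isTriangulated : ObjectProperty.IsTriangulated (· ∈ S) where
  exists_zero := HasZeroObject.zero.imp fun Z hZ ↦ ⟨hZ, hS.zero Z hZ⟩
  isStableUnderShiftBy n := ⟨hS.shift n⟩
  toIsTriangulatedClosed₂ :=
    have := hS.isClosedUnderIsomorphisms
    .mk' hS.ext₂

end TriangulatedSubcategories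

section InverseImage

lemma inverseImage_inverseImage_inv {C D : Type*} [Category* C] [Category* D]
    (P : ObjectProperty D) [P.IsClosedUnderIsomorphisms] (F : C ⥤ D) [F.IsEquivalence] :
    (P.inverseImage F).inverseImage F.inv = P := by
  ext X
  exact P.prop_iff_of_iso (F.asEquivalence.counitIso.app X)

lemma inverseImage_le_inverseImage_iff {C D : Type*} [Category* C] [Category* D]
    (P Q : ObjectProperty D) [P.IsClosedUnderIsomorphisms] [Q.IsClosedUnderIsomorphisms]
    (F : C ⥤ D) [F.EssSurj] : P.inverseImage F ≤ Q.inverseImage F ↔ P ≤ Q where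
  mp h X hX := Q.prop_of_iso (F.objObjPreimageIso X)
    (h _ (P.prop_of_iso (F.objObjPreimageIso X).symm hX))
  mpr h _ hX := h _ hX

section

variable {D : Type*} [Category* D] [HasZeroObject D] [Preadditive D]
  [HasShift D ℤ] [∀ n : ℤ, (shiftFunctor D n).Additive] [Pretriangulated D]
  (F : 𝓕 ⥤ D) [F.CommShift ℤ] [F.IsEquivalence]

noncomputable instance : F.inv.CommShift ℤ :=
  F.adjunction.rightAdjointCommShift ℤ

instance [F.IsTriangulated] : F.inv.IsTriangulated :=
  have := F.adjunction.commShift_of_leftAdjoint ℤ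
  F.adjunction.isTriangulated_rightAdjoint

variable [F.IsTriangulated]

lemma isTriangulated_inverseImage_iff (P : ObjectProperty D) [P.IsClosedUnderIsomorphisms] :
    (P.inverseImage F).IsTriangulated ↔ P.IsTriangulated where
  mp _ := by
    rw [← inverseImage_inverseImage_inv P F]
    infer_instance
  mpr _ := inferInstance

end

end InverseImage

section AdjointsOfInclusions

section

variable {C : Type*} [Category C]

/-- The coreflection of the ambient category onto a coreflective full subcategory, as an
endofunctor of the ambient category: this is `σ_{≥n}` for the subcategory `𝓕(≥n)`. -/
noncomputable def coreflection (P : ObjectProperty C) [P.ι.IsLeftAdjoint] : C ⥤ C :=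
  P.ι.rightAdjoint ⋙ P.ι

/-- The reflection of the ambient category onto a reflective full subcategory, as an
endofunctor of the ambient category: this is `σ_{≤n}` for the subcategory `𝓕(≤n)`. -/
noncomputable def reflection (P : ObjectProperty C) [P.ι.IsRightAdjoint] : C ⥤ C :=
  P.ι.leftAdjoint ⋙ P.ι

end

variable (P : ObjectProperty 𝓕) [P.IsTriangulated]

noncomputable instance [P.ι.IsLeftAdjoint] : P.ι.rightAdjoint.CommShift ℤ :=
  (Adjunction.ofIsLeftAdjoint P.ι).rightAdjointCommShift ℤ

noncomputable instance [P.ι.IsRightAdjoint] : P.ι.leftAdjoint.CommShift ℤ :=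
  (Adjunction.ofIsRightAdjoint P.ι).leftAdjointCommShift ℤ

noncomputable instance [P.ι.IsLeftAdjoint] : (coreflection P).CommShift ℤ :=
  inferInstanceAs ((P.ι.rightAdjoint ⋙ P.ι).CommShift ℤ)

noncomputable instance [P.ι.IsRightAdjoint] : (reflection P).CommShift ℤ :=
  inferInstanceAs ((P.ι.leftAdjoint ⋙ P.ι).CommShift ℤ)

instance [P.ι.IsLeftAdjoint] : (coreflection P).IsTriangulated :=
  have := (Adjunction.ofIsLeftAdjoint P.ι).commShift_of_leftAdjoint ℤ
  have := (Adjunction.ofIsLeftAdjoint P.ι).isTriangulated_rightAdjoint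
  inferInstanceAs (P.ι.rightAdjoint ⋙ P.ι).IsTriangulated

instance [P.ι.IsRightAdjoint] : (reflection P).IsTriangulated :=
  have := (Adjunction.ofIsRightAdjoint P.ι).commShift_of_rightAdjoint ℤ
  have := (Adjunction.ofIsRightAdjoint P.ι).isTriangulated_leftAdjoint
  inferInstanceAs (P.ι.leftAdjoint ⋙ P.ι).IsTriangulated

end AdjointsOfInclusions

section SemiorthogonalDecomposition

/-- A semiorthogonal decomposition of a triangulated category: there are no nonzero morphisms
from `P` to `Q`, and every object `X` sits in a distinguished triangle `A ⟶ X ⟶ B ⟶ A⟦1⟧`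
with `P A` and `Q B`. -/
structure IsSemiorthogonalDecomposition (P Q : ObjectProperty 𝓕) : Prop where
  le_leftOrthogonal : P ≤ Q.leftOrthogonal
  exists_triangle (X : 𝓕) : P.extensionProduct Q X

variable {P Q : ObjectProperty 𝓕} {A B X : 𝓕} {f : A ⟶ X} {g : X ⟶ B} {h : B ⟶ A⟦(1 : ℤ)⟧}

namespace IsSemiorthogonalDecomposition

lemma le_rightOrthogonal (d : IsSemiorthogonalDecomposition P Q) : Q ≤ P.rightOrthogonal :=
  fun _ hY _ f hX ↦ d.le_leftOrthogonal _ hX f hY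

section Coreflection

variable [Q.IsTriangulated]

lemma bijective_comp_mor₁ (d : IsSemiorthogonalDecomposition P Q)
    (hT : Triangle.mk f g h ∈ distTriang 𝓕) (hB : Q B) {Z : 𝓕} (hZ : P Z) :
    Function.Bijective fun k : Z ⟶ A ↦ k ≫ f := by
  have hZ' := d.le_leftOrthogonal _ hZ
  rw [← ObjectProperty.isColocal_trW] at hZ'
  exact hZ' f (.mk Q hT hB)

/-- The first morphism of a decomposition triangle of `X` is the universal morphism to `X` from
an object of `P`. -/
noncomputable def isTerminalMor₁ (d : IsSemiorthogonalDecomposition P Q)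
    (hT : Triangle.mk f g h ∈ distTriang 𝓕) (hA : P A) (hB : Q B) :
    IsTerminal (CostructuredArrow.mk (S := P.ι) (Y := ⟨A, hA⟩) f) :=
  have bij (Z : CostructuredArrow P.ι X) := d.bijective_comp_mor₁ hT hB Z.left.property
  .ofUniqueHom
    (fun Z ↦ CostructuredArrow.homMk (P.homMk ((bij Z).2 Z.hom).choose)
      ((bij Z).2 Z.hom).choose_spec)
    (fun Z m ↦ by
      ext
      exact (bij Z).1 ((CostructuredArrow.w m).trans ((bij Z).2 Z.hom).choose_spec.symm))

lemma isLeftAdjoint_ι (d : IsSemiorthogonalDecomposition P Q) : P.ι.IsLeftAdjoint := by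
  rw [isLeftAdjoint_iff_hasTerminal_costructuredArrow]
  intro X
  obtain ⟨A, B, f, g, h, hT, hA, hB⟩ := d.exists_triangle X
  exact (d.isTerminalMor₁ hT hA hB).hasTerminal

/-- Any decomposition triangle of `X` computes its coreflection. -/
noncomputable def coreflectionIso [P.ι.IsLeftAdjoint] (d : IsSemiorthogonalDecomposition P Q)
    (hT : Triangle.mk f g h ∈ distTriang 𝓕) (hA : P A) (hB : Q B) :
    (coreflection P).obj X ≅ A :=
  (CostructuredArrow.proj P.ι X ⋙ P.ι).mapIso
    ((mkTerminalOfRightAdjoint _ (Adjunction.ofIsLeftAdjoint P.ι) X).uniqueUpToIso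
      (d.isTerminalMor₁ hT hA hB))

end Coreflection

section Reflection

variable [P.IsTriangulated]

lemma bijective_mor₂_comp (d : IsSemiorthogonalDecomposition P Q)
    (hT : Triangle.mk f g h ∈ distTriang 𝓕) (hA : P A) {Z : 𝓕} (hZ : Q Z) :
    Function.Bijective fun k : B ⟶ Z ↦ g ≫ k := by
  have hZ' := d.le_rightOrthogonal _ hZ
  rw [← ObjectProperty.isLocal_trW] at hZ'
  exact hZ' g (.mk' P hT hA)

/-- The second morphism of a decomposition triangle of `X` is the universal morphism from `X` to
an object of `Q`. -/
noncomputable def isInitialMor₂ (d : IsSemiorthogonalDecomposition P Q)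
    (hT : Triangle.mk f g h ∈ distTriang 𝓕) (hA : P A) (hB : Q B) :
    IsInitial (StructuredArrow.mk (T := Q.ι) (Y := ⟨B, hB⟩) g) :=
  have bij (Z : StructuredArrow X Q.ι) := d.bijective_mor₂_comp hT hA Z.right.property
  .ofUniqueHom
    (fun Z ↦ StructuredArrow.homMk (Q.homMk ((bij Z).2 Z.hom).choose)
      ((bij Z).2 Z.hom).choose_spec)
    (fun Z m ↦ by
      ext
      exact (bij Z).1 ((StructuredArrow.w m).trans ((bij Z).2 Z.hom).choose_spec.symm))

lemma isRightAdjoint_ι (d : IsSemiorthogonalDecomposition P Q) : Q.ι.IsRightAdjoint := by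
  rw [isRightAdjoint_iff_hasInitial_structuredArrow]
  intro X
  obtain ⟨A, B, f, g, h, hT, hA, hB⟩ := d.exists_triangle X
  exact (d.isInitialMor₂ hT hA hB).hasInitial

/-- Any decomposition triangle of `X` computes its reflection. -/
noncomputable def reflectionIso [Q.ι.IsRightAdjoint]
    (d : IsSemiorthogonalDecomposition P Q)
    (hT : Triangle.mk f g h ∈ distTriang 𝓕) (hA : P A) (hB : Q B) :
    (reflection Q).obj X ≅ B :=
  (StructuredArrow.proj X Q.ι ⋙ Q.ι).mapIso
    ((mkInitialOfLeftAdjoint _ (Adjunction.ofIsRightAdjoint Q.ι) X).uniqueUpToIso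
      (d.isInitialMor₂ hT hA hB))

end Reflection

lemma isZero_coreflection [P.ContainsZero] [P.IsClosedUnderIsomorphisms] [Q.IsTriangulated]
    [P.ι.IsLeftAdjoint] (d : IsSemiorthogonalDecomposition P Q) (hX : Q X) :
    IsZero ((coreflection P).obj X) :=
  (isZero_zero 𝓕).of_iso (d.coreflectionIso (contractible_distinguished₁ X) P.prop_zero hX)

lemma isZero_reflection [P.IsTriangulated] [Q.ContainsZero] [Q.IsClosedUnderIsomorphisms]
    [Q.ι.IsRightAdjoint] (d : IsSemiorthogonalDecomposition P Q) (hX : P X) :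
    IsZero ((reflection Q).obj X) :=
  (isZero_zero 𝓕).of_iso (d.reflectionIso (contractible_distinguished X) hX Q.prop_zero)

noncomputable def coreflectionIsoSelf [Q.IsTriangulated] [Q.IsClosedUnderIsomorphisms]
    [P.ι.IsLeftAdjoint] (d : IsSemiorthogonalDecomposition P Q) (hX : P X) :
    (coreflection P).obj X ≅ X :=
  d.coreflectionIso (contractible_distinguished X) hX Q.prop_zero

noncomputable def reflectionIsoSelf [P.IsTriangulated] [P.IsClosedUnderIsomorphisms]
    [Q.ι.IsRightAdjoint] (d : IsSemiorthogonalDecomposition P Q) (hX : Q X) :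
    (reflection Q).obj X ≅ X :=
  d.reflectionIso (contractible_distinguished₁ X) P.prop_zero hX

end IsSemiorthogonalDecomposition

section

variable {D : Type*} [Category* D] [HasZeroObject D] [Preadditive D]
  [HasShift D ℤ] [∀ n : ℤ, (shiftFunctor D n).Additive] [Pretriangulated D]
  {P' Q' : ObjectProperty D} (F : 𝓕 ⥤ D) [F.CommShift ℤ] [F.IsTriangulated]

lemma IsSemiorthogonalDecomposition.nonempty_coreflection_iso
    [P.ι.IsLeftAdjoint] [P'.ι.IsLeftAdjoint] [Q.IsTriangulated] [Q'.IsTriangulated]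
    (d : IsSemiorthogonalDecomposition P Q) (d' : IsSemiorthogonalDecomposition P' Q')
    (hP : P ≤ P'.inverseImage F) (hQ : Q ≤ Q'.inverseImage F) (X : 𝓕) :
    Nonempty ((coreflection P').obj (F.obj X) ≅ F.obj ((coreflection P).obj X)) := by
  obtain ⟨A, B, f, g, h, hT, hA, hB⟩ := d.exists_triangle X
  exact ⟨d'.coreflectionIso (F.map_distinguished _ hT) (hP _ hA) (hQ _ hB) ≪≫
    F.mapIso (d.coreflectionIso hT hA hB).symm⟩

lemma IsSemiorthogonalDecomposition.nonempty_reflection_iso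
    [Q.ι.IsRightAdjoint] [Q'.ι.IsRightAdjoint] [P.IsTriangulated] [P'.IsTriangulated]
    (d : IsSemiorthogonalDecomposition P Q) (d' : IsSemiorthogonalDecomposition P' Q')
    (hP : P ≤ P'.inverseImage F) (hQ : Q ≤ Q'.inverseImage F) (X : 𝓕) :
    Nonempty ((reflection Q').obj (F.obj X) ≅ F.obj ((reflection Q).obj X)) := by
  obtain ⟨A, B, f, g, h, hT, hA, hB⟩ := d.exists_triangle X
  exact ⟨d'.reflectionIso (F.map_distinguished _ hT) (hP _ hA) (hQ _ hB) ≪≫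
    F.mapIso (d.reflectionIso hT hA hB).symm⟩

variable [F.IsEquivalence] [P'.IsClosedUnderIsomorphisms] [Q'.IsClosedUnderIsomorphisms]

lemma IsSemiorthogonalDecomposition.inverseImage (d : IsSemiorthogonalDecomposition P' Q') :
    IsSemiorthogonalDecomposition (P'.inverseImage F) (Q'.inverseImage F) where
  le_leftOrthogonal X hX Y f hY := F.map_eq_zero_iff.1 (d.le_leftOrthogonal _ hX (F.map f) hY)
  exists_triangle X := by
    obtain ⟨A, B, f, g, h, hT, hA, hB⟩ := d.exists_triangle (F.obj X)
    obtain ⟨T, hT', ⟨e⟩⟩ := F.mem_mapTriangle_essImage_of_distinguished _ hT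
    have hT'' : ((P'.inverseImage F).extensionProduct (Q'.inverseImage F)) T.obj₂ :=
      ⟨_, _, _, _, _, hT', P'.prop_of_iso (Triangle.π₁.mapIso e).symm hA,
        Q'.prop_of_iso (Triangle.π₃.mapIso e).symm hB⟩
    exact ObjectProperty.prop_of_iso _ (F.preimageIso (Triangle.π₂.mapIso e)) hT''

lemma isSemiorthogonalDecomposition_inverseImage_iff :
    IsSemiorthogonalDecomposition (P'.inverseImage F) (Q'.inverseImage F) ↔
      IsSemiorthogonalDecomposition P' Q' where
  mp d := by
    rw [← inverseImage_inverseImage_inv P' F, ← inverseImage_inverseImage_inv Q' F]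
    exact d.inverseImage F.inv
  mpr d := d.inverseImage F

end

end SemiorthogonalDecomposition

section Powers

variable {C : Type u} [Category.{v} C] (s : C ⥤ C)

lemma sPowRel_iff_nonempty_iso_iterate (m : ℕ) (X Y : C) :
    SPowRel s m X Y ↔ Nonempty (s.obj^[m] X ≅ Y) := by
  induction m generalizing Y with
  | zero => rfl
  | succ m ih =>
    simp only [SPowRel, ih, Function.iterate_succ_apply']
    exact ⟨fun ⟨_, ⟨e⟩, ⟨e'⟩⟩ ↦ ⟨s.mapIso e ≪≫ e'⟩, fun ⟨e⟩ ↦ ⟨_, ⟨Iso.refl _⟩, ⟨e⟩⟩⟩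

lemma nonempty_iso_iterate (m : ℕ) {X Y : C} (e : X ≅ Y) :
    Nonempty (s.obj^[m] X ≅ s.obj^[m] Y) := by
  induction m with
  | zero => exact ⟨e⟩
  | succ m ih => simpa only [Function.iterate_succ_apply'] using ih.map s.mapIso

lemma sPowRelZ_natCast_iff (m : ℕ) (X Y : C) :
    SPowRelZ s m X Y ↔ Nonempty (s.obj^[m] X ≅ Y) := by
  simp [SPowRelZ, sPowRel_iff_nonempty_iso_iterate]

lemma sPowRelZ_neg_natCast_iff (m : ℕ) (X Y : C) :
    SPowRelZ s (-m) X Y ↔ Nonempty (s.obj^[m] Y ≅ X) := by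
  rcases m with _ | m
  · simpa using (sPowRelZ_natCast_iff s 0 X Y).trans (Iso.nonempty_iso_symm X Y)
  · simp [SPowRelZ, sPowRel_iff_nonempty_iso_iterate, show ¬ (0 : ℤ) ≤ -1 + -m by omega]

variable {s}

lemma SPowRelZ.of_iso {n : ℤ} {W X Y : C} (h : SPowRelZ s n W X) (e : X ≅ Y) :
    SPowRelZ s n W Y := by
  obtain ⟨m, rfl | rfl⟩ := n.eq_nat_or_neg
  · rw [sPowRelZ_natCast_iff] at h ⊢
    exact h.map (· ≪≫ e)
  · rw [sPowRelZ_neg_natCast_iff] at h ⊢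
    obtain ⟨e'⟩ := nonempty_iso_iterate s m e
    exact h.map (e'.symm ≪≫ ·)

variable (s)

lemma sPowRelZ_add_one_iff [s.Full] [s.Faithful] (n : ℤ) (W Y : C) :
    SPowRelZ s (n + 1) W (s.obj Y) ↔ SPowRelZ s n W Y := by
  obtain ⟨m, rfl | rfl⟩ : ∃ m : ℕ, n = m ∨ n = -(m + 1 : ℕ) := by
    cases n with
    | ofNat m => exact ⟨m, .inl rfl⟩
    | negSucc m => exact ⟨m, .inr rfl⟩
  · rw [← Nat.cast_add_one, sPowRelZ_natCast_iff, sPowRelZ_natCast_iff,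
      Function.iterate_succ_apply']
    exact ⟨fun ⟨e⟩ ↦ ⟨s.preimageIso e⟩, fun ⟨e⟩ ↦ ⟨s.mapIso e⟩⟩
  · rw [sPowRelZ_neg_natCast_iff, Function.iterate_succ_apply, ← sPowRelZ_neg_natCast_iff,
      Nat.cast_add_one, neg_add, neg_add_cancel_right]

/-- The full subcategory `sⁿ S` for `n : ℤ`, as a property of objects. -/
def powImage (S : Set C) (n : ℤ) : ObjectProperty C :=
  fun X ↦ ∃ W ∈ S, SPowRelZ s n W X

instance (S : Set C) (n : ℤ) : (powImage s S n).IsClosedUnderIsomorphisms where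
  of_iso e := fun ⟨W, hW, h⟩ ↦ ⟨W, hW, h.of_iso e⟩

lemma inverseImage_powImage_add_one [s.Full] [s.Faithful] (S : Set C) (n : ℤ) :
    (powImage s S (n + 1)).inverseImage s = powImage s S n := by
  ext X
  simp only [ObjectProperty.prop_inverseImage_iff, powImage, sPowRelZ_add_one_iff]

lemma powImage_zero (S : Set C) : powImage s S 0 = ObjectProperty.isoClosure (· ∈ S) := by
  ext X
  simp only [powImage, ObjectProperty.prop_isoClosure_iff, exists_prop, Iso.nonempty_iso_symm X]
  exact exists_congr fun W ↦ and_congr_right fun _ ↦ sPowRelZ_natCast_iff s 0 W X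

variable (s : 𝓕 ⥤ 𝓕) [s.CommShift ℤ] [s.IsTriangulated] [s.IsEquivalence]

lemma isTriangulated_powImage {S : Set 𝓕} (hS : IsTriangulatedSub S) (n : ℤ) :
    (powImage s S n).IsTriangulated := by
  induction n using int_induction_of_iff_add_one with
  | zero =>
    have := hS.isTriangulated
    rw [powImage_zero]
    infer_instance
  | add_one n => rw [← inverseImage_powImage_add_one, isTriangulated_inverseImage_iff]

end Powers

namespace FilteredTriangulated

variable (Ft : FilteredTriangulated 𝓕)

noncomputable instance : Ft.s.CommShift ℤ := Ft.s_comm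

instance : Ft.s.IsTriangulated := Ft.s_triang

instance : Ft.s.IsEquivalence := Ft.s_equiv

/-- The subcategory `𝓕(≤n)` as a property of objects. -/
def isLE (n : ℤ) : ObjectProperty 𝓕 := (· ∈ Ft.le n)

/-- The subcategory `𝓕(≥n)` as a property of objects. -/
def isGE (n : ℤ) : ObjectProperty 𝓕 := (· ∈ Ft.ge n)

instance (n : ℤ) : (Ft.isLE n).IsTriangulated := (Ft.sub_le n).isTriangulated

instance (n : ℤ) : (Ft.isGE n).IsTriangulated := (Ft.sub_ge n).isTriangulated

instance (n : ℤ) : (Ft.isLE n).IsClosedUnderIsomorphisms := (Ft.sub_le n).isClosedUnderIsomorphisms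

instance (n : ℤ) : (Ft.isGE n).IsClosedUnderIsomorphisms := (Ft.sub_ge n).isClosedUnderIsomorphisms

lemma inverseImage_isLE {m n : ℤ} (h : m + 1 = n) :
    (Ft.isLE n).inverseImage Ft.s = Ft.isLE m := by
  subst h
  ext X
  exact (Ft.s_le m X).symm

lemma inverseImage_isGE {m n : ℤ} (h : m + 1 = n) :
    (Ft.isGE n).inverseImage Ft.s = Ft.isGE m := by
  subst h
  ext X
  exact (Ft.s_ge m X).symm

lemma monotone_isLE : Monotone Ft.isLE := by
  refine monotone_int_of_le_succ fun n ↦ ?_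
  induction n using int_induction_of_iff_add_one with
  | zero => exact Ft.fcat1_le
  | add_one n =>
    rw [← Ft.inverseImage_isLE (m := n) rfl, ← Ft.inverseImage_isLE (m := n + 1) rfl,
      inverseImage_le_inverseImage_iff]

lemma antitone_isGE : Antitone Ft.isGE := by
  refine antitone_int_of_succ_le fun n ↦ ?_
  induction n using int_induction_of_iff_add_one with
  | zero => exact Ft.fcat1_ge
  | add_one n =>
    rw [← Ft.inverseImage_isGE (m := n) rfl, ← Ft.inverseImage_isGE (m := n + 1) rfl,
      inverseImage_le_inverseImage_iff]

lemma isSemiorthogonalDecomposition {m n : ℤ} (h : m + 1 = n) :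
    IsSemiorthogonalDecomposition (Ft.isGE n) (Ft.isLE m) := by
  subst h
  induction m using int_induction_of_iff_add_one with
  | zero =>
    refine ⟨fun X hX Y f hY ↦ Ft.fcat3 X hX Y hY f, fun X ↦ ?_⟩
    obtain ⟨A, B, hA, hB, f, g, h, hT⟩ := Ft.fcat4 X
    exact ⟨A, B, f, g, h, hT, hA, hB⟩
  | add_one m =>
    rw [← Ft.inverseImage_isGE rfl, ← Ft.inverseImage_isLE rfl,
      isSemiorthogonalDecomposition_inverseImage_iff]

instance (n : ℤ) : (Ft.isLE n).ι.IsRightAdjoint :=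
  (Ft.isSemiorthogonalDecomposition rfl).isRightAdjoint_ι

instance (n : ℤ) : (Ft.isGE n).ι.IsLeftAdjoint :=
  (Ft.isSemiorthogonalDecomposition (sub_add_cancel n 1)).isLeftAdjoint_ι

/-- The functor `grⁿ = σ_{≤n} ∘ σ_{≥n}`. -/
noncomputable abbrev gr (n : ℤ) : 𝓕 ⥤ 𝓕 := coreflection (Ft.isGE n) ⋙ reflection (Ft.isLE n)

variable {Ft} {X : 𝓕}

lemma isZero_gr_of_mem_le {m n : ℤ} (hX : X ∈ Ft.le m) (h : m < n) : IsZero ((Ft.gr n).obj X) :=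
  have d := Ft.isSemiorthogonalDecomposition (sub_add_cancel n 1)
  (reflection _).map_isZero
    (d.isZero_coreflection (Ft.monotone_isLE (Int.le_sub_one_of_lt h) _ hX))

lemma isZero_gr_of_mem_ge {m n : ℤ} (hX : X ∈ Ft.ge m) (h : n < m) : IsZero ((Ft.gr n).obj X) :=
  have d := Ft.isSemiorthogonalDecomposition (sub_add_cancel n 1)
  have d' := Ft.isSemiorthogonalDecomposition (m := n) rfl
  (d'.isZero_reflection (Ft.antitone_isGE h _ hX)).of_iso
    ((reflection _).mapIso (d.coreflectionIsoSelf (Ft.antitone_isGE h.le _ hX)))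

noncomputable def grIsoSelf {n : ℤ} (hX : X ∈ Ft.le n ∩ Ft.ge n) : (Ft.gr n).obj X ≅ X :=
  have d := Ft.isSemiorthogonalDecomposition (sub_add_cancel n 1)
  have d' := Ft.isSemiorthogonalDecomposition (m := n) rfl
  (reflection _).mapIso (d.coreflectionIsoSelf hX.2) ≪≫ d'.reflectionIsoSelf hX.1

variable (Ft)

lemma nonempty_gr_add_one_obj_s_iso (n : ℤ) (X : 𝓕) :
    Nonempty ((Ft.gr (n + 1)).obj (Ft.s.obj X) ≅ Ft.s.obj ((Ft.gr n).obj X)) := by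
  have d {m n : ℤ} (h : m + 1 = n) := Ft.isSemiorthogonalDecomposition h
  obtain ⟨e⟩ := (d (sub_add_cancel n 1)).nonempty_coreflection_iso Ft.s
    (d (sub_add_cancel (n + 1) 1)) (Ft.inverseImage_isGE rfl).ge
    (Ft.inverseImage_isLE (by lia)).ge X
  obtain ⟨e'⟩ := (d rfl).nonempty_reflection_iso Ft.s (d rfl) (Ft.inverseImage_isGE rfl).ge
    (Ft.inverseImage_isLE rfl).ge ((coreflection (Ft.isGE n)).obj X)
  exact ⟨(reflection _).mapIso e ≪≫ e'⟩

section GrCond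

variable (S : Set 𝓕)

lemma grCond_eq_inverseImage (n : ℤ) :
    GrCond Ft S n = (powImage Ft.s S n).inverseImage (Ft.gr n) := by
  have d := Ft.isSemiorthogonalDecomposition (sub_add_cancel n 1)
  have d' := Ft.isSemiorthogonalDecomposition (m := n) rfl
  ext X
  constructor
  · rintro ⟨A, B, A', G, f, g, h, f', g', h', hA, hB, hA', hG, hT, hT', hW⟩
    exact (powImage Ft.s S n).prop_of_iso
      ((reflection _).mapIso (d.coreflectionIso hT hA hB) ≪≫ d'.reflectionIso hT' hA' hG).symm hW
  · intro hX
    obtain ⟨A, B, f, g, h, hT, hA, hB⟩ := d.exists_triangle X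
    obtain ⟨A', G, f', g', h', hT', hA', hG⟩ := d'.exists_triangle A
    exact ⟨A, B, A', G, f, g, h, f', g', h', hA, hB, hA', hG, hT, hT',
      (powImage Ft.s S n).prop_of_iso
        ((reflection _).mapIso (d.coreflectionIso hT hA hB) ≪≫ d'.reflectionIso hT' hA' hG) hX⟩

instance (n : ℤ) : ObjectProperty.IsClosedUnderIsomorphisms (GrCond Ft S n) := by
  rw [grCond_eq_inverseImage]
  infer_instance

lemma grCond_add_one_obj_s_iff (n : ℤ) (X : 𝓕) :
    GrCond Ft S (n + 1) (Ft.s.obj X) ↔ GrCond Ft S n X := by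
  obtain ⟨e⟩ := Ft.nonempty_gr_add_one_obj_s_iso n X
  rw [grCond_eq_inverseImage, grCond_eq_inverseImage, ← inverseImage_powImage_add_one Ft.s S n]
  exact (powImage Ft.s S (n + 1)).prop_iff_of_iso e

lemma forall_grCond_obj_s_iff (X : 𝓕) :
    (∀ n, GrCond Ft S n (Ft.s.obj X)) ↔ ∀ n, GrCond Ft S n X := by
  simp only [← Ft.grCond_add_one_obj_s_iff S _ X]
  exact (Equiv.addRight (1 : ℤ)).forall_congr_right.symm

variable {S} (hS : IsTriangulatedSub S)

include hS

lemma isTriangulated_grCond (n : ℤ) : ObjectProperty.IsTriangulated (GrCond Ft S n) := by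
  have := isTriangulated_powImage Ft.s hS n
  rw [grCond_eq_inverseImage]
  infer_instance

lemma grCond_of_isZero_gr {n : ℤ} {X : 𝓕} (hX : IsZero ((Ft.gr n).obj X)) : GrCond Ft S n X := by
  have := isTriangulated_powImage Ft.s hS n
  rw [grCond_eq_inverseImage]
  exact (powImage Ft.s S n).prop_of_isZero hX

lemma grCond_zero_iff {X : 𝓕} (hX : X ∈ Ft.le 0 ∩ Ft.ge 0) : GrCond Ft S 0 X ↔ X ∈ S := by
  have := hS.isClosedUnderIsomorphisms
  rw [grCond_eq_inverseImage, powImage_zero, ObjectProperty.isoClosure_eq_self]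
  exact ObjectProperty.prop_iff_of_iso (· ∈ S) (grIsoSelf hX)

lemma forall_grCond_iff_mem {X : 𝓕} (hX : X ∈ Ft.le 0 ∩ Ft.ge 0) :
    (∀ n, GrCond Ft S n X) ↔ X ∈ S := by
  rw [← Ft.grCond_zero_iff hS hX]
  refine ⟨fun h ↦ h 0, fun h n ↦ ?_⟩
  rcases lt_trichotomy n 0 with hn | rfl | hn
  · exact Ft.grCond_of_isZero_gr hS (isZero_gr_of_mem_ge hX.2 hn)
  · exact h
  · exact Ft.grCond_of_isZero_gr hS (isZero_gr_of_mem_le hX.1 hn)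

lemma grCond_of_distTriang {n : ℤ} {T : Triangle 𝓕} (hT : T ∈ distTriang 𝓕)
    (h₁ : T.obj₁ ∈ Ft.ge 1) (h₃ : T.obj₃ ∈ Ft.le 0) (h₂ : GrCond Ft S n T.obj₂) :
    GrCond Ft S n T.obj₁ ∧ GrCond Ft S n T.obj₃ := by
  have := Ft.isTriangulated_grCond hS n
  rcases lt_or_ge n 1 with hn | hn
  · have hA := Ft.grCond_of_isZero_gr hS (isZero_gr_of_mem_ge h₁ hn)
    exact ⟨hA, ObjectProperty.ext_of_isTriangulatedClosed₃ (GrCond Ft S n) T hT hA h₂⟩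
  · have hB := Ft.grCond_of_isZero_gr hS (isZero_gr_of_mem_le h₃ hn)
    exact ⟨ObjectProperty.ext_of_isTriangulatedClosed₁ (GrCond Ft S n) T hT h₂ hB, hB⟩

end GrCond

end FilteredTriangulated

/-- Proposition 4.3: if `𝓕` is a filtered enhancement of
`T = 𝓕(≤0) ∩ 𝓕(≥0)` and `S` is a full triangulated subcategory of `T`, then
`G = { X | s^{-n} grⁿ(X) ∈ S for all n }` is a full triangulated subcategory of `𝓕`,
closed under `s` and `s⁻¹`, which — with the subcategories `G ∩ 𝓕(≤n)`, `G ∩ 𝓕(≥n)`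
and the restrictions of `s` and `α` — is a filtered triangulated category (the only
axiom that does not restrict trivially being fcat4) with `G(≤0) ∩ G(≥0) = S`; that is,
`G` is a filtered enhancement of `S`. -/
theorem filtered_enhancement_of_subcategory (Ft : FilteredTriangulated 𝓕)
    (S : Set 𝓕) (hS : IsTriangulatedSub S) (hsub : S ⊆ Ft.le 0 ∩ Ft.ge 0) :
    IsTriangulatedSub {X : 𝓕 | ∀ n : ℤ, GrCond Ft S n X} ∧
    (∀ X : 𝓕, (∀ n : ℤ, GrCond Ft S n X) ↔ (∀ n : ℤ, GrCond Ft S n (Ft.s.obj X))) ∧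
    (∀ X : 𝓕, (∀ n : ℤ, GrCond Ft S n X) →
      ∃ (A B : 𝓕) (_ : A ∈ Ft.ge 1 ∧ ∀ n : ℤ, GrCond Ft S n A)
        (_ : B ∈ Ft.le 0 ∧ ∀ n : ℤ, GrCond Ft S n B)
        (f : A ⟶ X) (g : X ⟶ B) (h : B ⟶ A⟦(1:ℤ)⟧),
        Triangle.mk f g h ∈ distTriang 𝓕) ∧
    ({X : 𝓕 | ∀ n : ℤ, GrCond Ft S n X} ∩ (Ft.le 0 ∩ Ft.ge 0) = S) := by
  have (n : ℤ) := Ft.isTriangulated_grCond hS n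
  refine ⟨isTriangulatedSub_setOf_forall (GrCond Ft S),
    fun X ↦ (Ft.forall_grCond_obj_s_iff S X).symm, fun X hX ↦ ?_, ?_⟩
  · obtain ⟨A, B, hA, hB, f, g, h, hT⟩ := Ft.fcat4 X
    have hAB (n : ℤ) := Ft.grCond_of_distTriang hS hT hA hB (hX n)
    exact ⟨A, B, ⟨hA, fun n ↦ (hAB n).1⟩, ⟨hB, fun n ↦ (hAB n).2⟩, f, g, h, hT⟩
  · ext X
    exact ⟨fun ⟨hX, h⟩ ↦ (Ft.forall_grCond_iff_mem hS h).1 hX,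
      fun hX ↦ ⟨(Ft.forall_grCond_iff_mem hS (hsub hX)).2 hX, hsub hX⟩⟩

end Paper
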